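/- Fix m ≥ 2 and a hierarchy S of size m, and let H^{(m)}_n denote the number of isomorphism classes of hierarchies of size n containing no subhierarchy isomorphic to S. Let ρ_m be the radius of convergence of the real power series Σ_{n≥1} H^{(m)}_n xⁿ and let ρ₀ be the radius of convergence of Σ_{n≥1} H_n xⁿ, where H_n is the number of isomorphism classes of hierarchies of size n. Then ρ_m > ρ₀. -/

import Mathlib

/-- Finite rooted unordered trees, presented with an ordered list of children
(unorderedness is taken care of by the isomorphism relation `RTree.Iso`). -/
inductive RTree : Type
  | node : List RTree → RTree

/-- The number of leaves (external vertices) of a rooted tree: the *size* of a hierarchy. -/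
def RTree.leaves : RTree → ℕ
  | .node [] => 1
  | .node (a :: l) => ((a :: l).attach.map (fun x => RTree.leaves x.1)).sum
decreasing_by
  have := List.sizeOf_lt_of_mem x.2
  simp only [RTree.node.sizeOf_spec]
  omega

/-- A hierarchy: a rooted tree in which no vertex has exactly one child. -/
inductive RTree.IsHierarchy : RTree → Prop
  | node {l : List RTree} : l.length ≠ 1 → (∀ t ∈ l, RTree.IsHierarchy t) →
      RTree.IsHierarchy (.node l)

/-- `s.SubtreeOf t` : `s` is the subtree of `t` rooted at some vertex of `t`
(that vertex together with all of its descendants). -/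
inductive RTree.SubtreeOf : RTree → RTree → Prop
  | refl (t : RTree) : RTree.SubtreeOf t t
  | child {s c : RTree} {l : List RTree} : c ∈ l → RTree.SubtreeOf s c →
      RTree.SubtreeOf s (.node l)

/-- Isomorphism of rooted unordered trees: the children of the two roots can be
matched up bijectively by isomorphisms. -/
inductive RTree.Iso : RTree → RTree → Prop
  | node {l₁ l l₂ : List RTree} (h₁ : List.Forall₂ RTree.Iso l₁ l) (h₂ : l.Perm l₂) :
      RTree.Iso (.node l₁) (.node l₂)

/-- The number of isomorphism classes of hierarchies of size `n` (OEIS A000669). -/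
noncomputable def hierarchyCount (n : ℕ) : ℕ :=
  Nat.card (Quot fun a b : {t : RTree // t.IsHierarchy ∧ t.leaves = n} => RTree.Iso a.1 b.1)

/-- `t` contains no subhierarchy isomorphic to `S`. -/
def RTree.Avoids (t S : RTree) : Prop :=
  ∀ s : RTree, s.SubtreeOf t → ¬ RTree.Iso s S

/-- The number of isomorphism classes of hierarchies of size `n` containing
no subhierarchy isomorphic to `S`. -/
noncomputable def avoidCount (S : RTree) (n : ℕ) : ℕ :=
  Nat.card (Quot fun a b : {t : RTree // t.IsHierarchy ∧ t.leaves = n ∧ t.Avoids S} =>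
    RTree.Iso a.1 b.1)

/-- The radius of convergence of the real power series `∑ₙ aₙ xⁿ`. -/
noncomputable def radiusOf (a : ℕ → ℝ) : ENNReal :=
  (FormalMultilinearSeries.ofScalars ℝ a).radius

/-!
Write `H` and `A` for the generating functions of all hierarchies and of those avoiding `S`. A
hierarchy is a leaf or a multiset of at least two hierarchies, and by the Euler product multisets
are counted by `exp (∑ -log (1 - x ^ size u)) = exp (H x + L x)`, where `L` collects the terms of
order at least two of the logarithms. Hence `exp (H x + L x) = 1 + 2 H x - x`; for `A` and its own
`L` the right-hand side gains the term `x ^ size S`, because `S` is built from hierarchies avoiding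
`S` but is itself excluded.

If `H` converges beyond `x`, convexity of `exp` forces `exp (H x + L x) < 2`, that is
`H x < (1 + x) / 2`. Letting `x` tend to the radius `ρ` of `H` shows that `H ρ` converges and is at
most `(1 + ρ) / 2`. Since `A ρ + ρ ^ size S ≤ H ρ`, the exponential belonging to `A` is at most
`2 - ρ ^ size S < 2` at `ρ`. So the derivative in `y` of `exp (y + L x) - 2 y` is negative at
`y = A ρ`, and increasing `y` slightly gives strict inequality
`exp (y + L x) < 1 + 2 y + x ^ size S - x`. As `L` converges up to `√ρ > ρ`, this inequality
persists for `x` slightly larger than `ρ`, where `y` then bounds the truncations of `A`.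
-/

open scoped Topology
open Filter Set

/-! ### Generating functions of multisets -/

/-- A multiset on `insert a F` is the multiplicity of `a` together with a multiset on `F`. -/
def multisetInsertEquiv {α : Type*} [DecidableEq α] {a : α} {F : Finset α} (ha : a ∉ F) :
    ℕ × {M : Multiset α // ∀ b ∈ M, b ∈ F} ≃ {M : Multiset α // ∀ b ∈ M, b ∈ insert a F} where
  toFun p := ⟨Multiset.replicate p.1 a + p.2.1, fun b hb => by
    rcases Multiset.mem_add.1 hb with hb | hb
    · simp [Multiset.eq_of_mem_replicate hb]
    · exact Finset.mem_insert_of_mem (p.2.2 b hb)⟩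
  invFun M := (M.1.count a, ⟨M.1.filter (a ≠ ·), fun b hb => by
    obtain ⟨hb, hab⟩ := Multiset.mem_filter.1 hb
    exact (Finset.mem_insert.1 (M.2 b hb)).resolve_left (Ne.symm hab)⟩)
  left_inv := fun ⟨n, M, hM⟩ => by
    have haM : ∀ b ∈ M, a ≠ b := fun b hb => by rintro rfl; exact ha (hM a hb)
    have hcount : M.count a = 0 := Multiset.count_eq_zero.2 fun h => haM a h rfl
    have hrep : (Multiset.replicate n a).filter (a ≠ ·) = 0 :=
      Multiset.filter_eq_nil.2 fun b hb => by simp [Multiset.eq_of_mem_replicate hb]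
    ext1
    · simp [hcount]
    · ext1
      simp only [Multiset.filter_add, hrep, zero_add, Multiset.filter_eq_self.2 haM]
  right_inv M := Subtype.ext <| by
    simp only [← Multiset.filter_eq, Multiset.filter_add_not]

lemma hasSum_multiset_prod_finset {α : Type*} {w : α → ℝ} (F : Finset α)
    (h0 : ∀ a ∈ F, 0 ≤ w a) (h1 : ∀ a ∈ F, w a < 1) :
    HasSum (fun M : {M : Multiset α // ∀ a ∈ M, a ∈ F} => (M.1.map w).prod)
      (∏ a ∈ F, (1 - w a)⁻¹) := by
  classical
  induction F using Finset.induction_on with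
  | empty =>
    convert hasSum_single (⟨0, by simp⟩ : {M : Multiset α // ∀ a ∈ M, a ∈ (∅ : Finset α)})
      fun M hM => absurd (Subtype.ext (Multiset.eq_zero_of_forall_notMem (by simpa using M.2))) hM
    simp
  | insert a F ha ih =>
    rw [Finset.forall_mem_insert] at h0 h1
    rw [Finset.prod_insert ha, ← (multisetInsertEquiv ha).hasSum_iff]
    have hnonneg (M : {M : Multiset α // ∀ a ∈ M, a ∈ F}) : 0 ≤ (M.1.map w).prod :=
      Multiset.prod_nonneg (by simpa using fun a ha => h0.2 a (M.2 a ha))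
    have hgeom := hasSum_geometric_of_lt_one h0.1 h1.1
    have hF := ih h0.2 h1.2
    simpa [multisetInsertEquiv, Function.comp_def] using hgeom.mul hF
      (hgeom.summable.mul_of_nonneg hF.summable (fun n => pow_nonneg h0.1 n) hnonneg)

lemma hasSum_multiset_prod {α : Type*} {w : α → ℝ} (h0 : ∀ a, 0 ≤ w a) (h1 : ∀ a, w a < 1)
    (hs : Summable fun a => -Real.log (1 - w a)) :
    HasSum (fun M : Multiset α => (M.map w).prod) (Real.exp (∑' a, -Real.log (1 - w a))) := by
  classical
  have hexp (F : Finset α) :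
      ∏ a ∈ F, (1 - w a)⁻¹ = Real.exp (∑ a ∈ F, -Real.log (1 - w a)) := by
    rw [Real.exp_sum]
    exact Finset.prod_congr rfl fun a _ => by
      rw [Real.exp_neg, Real.exp_log (sub_pos.2 (h1 a))]
  have hfin (F : Finset α) := hexp F ▸
    hasSum_multiset_prod_finset F (fun a _ => h0 a) (fun a _ => h1 a)
  have hnonneg (M : Multiset α) : 0 ≤ (M.map w).prod :=
    Multiset.prod_nonneg (by simpa using fun a _ => h0 a)
  have hlog (a : α) : 0 ≤ -Real.log (1 - w a) := by
    have := Real.log_le_sub_one_of_pos (sub_pos.2 (h1 a))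
    linarith [h0 a]
  refine hasSum_of_isLUB_of_nonneg _ hnonneg ⟨?_, fun b hb => ?_⟩
  · rintro _ ⟨s, rfl⟩
    let F := s.biUnion Multiset.toFinset
    have hF : ∀ M ∈ s, ∀ a ∈ M, a ∈ F := fun M hM a ha =>
      Finset.mem_biUnion.2 ⟨M, hM, Multiset.mem_toFinset.2 ha⟩
    calc ∑ M ∈ s, (M.map w).prod
        = ∑ M ∈ s.subtype fun M => ∀ a ∈ M, a ∈ F, (M.1.map w).prod :=
          (Finset.sum_subtype_of_mem _ hF).symm
      _ ≤ Real.exp (∑ a ∈ F, -Real.log (1 - w a)) :=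
          sum_le_hasSum _ (fun M _ => hnonneg M.1) (hfin F)
      _ ≤ Real.exp (∑' a, -Real.log (1 - w a)) :=
          Real.exp_le_exp.2 (hs.sum_le_tsum F fun a _ => hlog a)
  · refine le_of_tendsto ((Real.continuous_exp.tendsto _).comp hs.hasSum) (.of_forall fun F => ?_)
    refine hasSum_le_of_sum_le (hfin F) fun t => ?_
    refine le_trans (le_of_eq ?_) (hb ⟨t.map (Function.Embedding.subtype _), rfl⟩)
    simp

lemma hasSum_multiset_prod_two_le_card {α : Type*} {w : α → ℝ} (h0 : ∀ a, 0 ≤ w a)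
    (h1 : ∀ a, w a < 1) (hw : Summable w) (hs : Summable fun a => -Real.log (1 - w a)) :
    HasSum (fun M : {M : Multiset α // 2 ≤ M.card} => (M.1.map w).prod)
      (Real.exp (∑' a, -Real.log (1 - w a)) - 1 - ∑' a, w a) := by
  classical
  have hempty : HasSum (fun M : Multiset α => if M = 0 then (1 : ℝ) else 0) 1 := hasSum_ite_eq 0 1
  have hsingle : HasSum (fun M : Multiset α => if M.card = 1 then (M.map w).prod else 0)
      (∑' a, w a) := by
    refine (Function.Injective.hasSum_iff (g := fun a => ({a} : Multiset α))
      (fun _ _ => Multiset.singleton_inj.1) fun M hM => if_neg fun h => hM ?_).1 ?_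
    · exact (Multiset.card_eq_one.1 h).imp fun _ => Eq.symm
    · simpa [Function.comp_def] using hw.hasSum
  refine (hasSum_subtype_iff_indicator (f := fun M : Multiset α => (M.map w).prod)
    (s := {M : Multiset α | 2 ≤ M.card})).2 <|
    (((hasSum_multiset_prod h0 h1 hs).sub hempty).sub hsingle).congr_fun fun M => ?_
  rcases M.empty_or_exists_mem with rfl | ⟨a, ha⟩
  · simp
  · obtain ⟨N, rfl⟩ := Multiset.exists_cons_of_mem ha
    rcases N.empty_or_exists_mem with rfl | ⟨b, hb⟩
    · simp
    · obtain ⟨N, rfl⟩ := Multiset.exists_cons_of_mem hb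
      simp

/-- The terms of order at least two in the expansion of `-log (1 - u)`. -/
noncomputable def logTail (u : ℝ) : ℝ := -Real.log (1 - u) - u

lemma logTail_nonneg {u : ℝ} (hu : u < 1) : 0 ≤ logTail u := by
  have := Real.log_le_sub_one_of_pos (sub_pos.2 hu)
  rw [logTail]
  linarith

lemma logTail_le {u : ℝ} (hu : u < 1) : logTail u ≤ u ^ 2 / (1 - u) := by
  have hu' : 0 < 1 - u := sub_pos.2 hu
  have := Real.one_sub_inv_le_log_of_pos hu'
  have hdiv : u ^ 2 / (1 - u) = (1 - u)⁻¹ - 1 - u := by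
    field_simp
    ring
  rw [logTail, hdiv]
  linarith

lemma logTail_mono {u v : ℝ} (hu : 0 ≤ u) (huv : u ≤ v) (hv : v < 1) : logTail u ≤ logTail v := by
  have hu' : 0 < 1 - u := by linarith
  have hv' : 0 < 1 - v := by linarith
  have hlog : Real.log ((1 - v) / (1 - u)) ≤ (1 - v) / (1 - u) - 1 :=
    Real.log_le_sub_one_of_pos (by positivity)
  have hdiv : (1 - v) / (1 - u) - 1 ≤ -(v - u) := by
    rw [div_sub_one hu'.ne', div_le_iff₀ hu']
    nlinarith
  rw [Real.log_div hv'.ne' hu'.ne'] at hlog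
  rw [logTail, logTail]
  linarith

lemma logTail_le_mul {u q : ℝ} (hu : 0 ≤ u) (huq : u ≤ q) (hq : q < 1) :
    logTail u ≤ q / (1 - q) * u :=
  calc logTail u ≤ u ^ 2 / (1 - u) := logTail_le (huq.trans_lt hq)
    _ = u / (1 - u) * u := by ring
    _ ≤ q / (1 - q) * u := by
      have : 0 < 1 - q := sub_pos.2 hq
      have : 0 ≤ q := hu.trans huq
      gcongr

lemma continuousOn_logTail : ContinuousOn logTail (Iio 1) :=
  ((ContinuousOn.log (by fun_prop) fun _ hu => (sub_pos.2 hu).ne').neg).sub continuousOn_id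

lemma exp_mul_one_add_sub_le (a b : ℝ) : Real.exp a * (1 + (b - a)) ≤ Real.exp b :=
  calc Real.exp a * (1 + (b - a)) ≤ Real.exp a * Real.exp (b - a) := by
        gcongr
        linarith [Real.add_one_le_exp (b - a)]
    _ = Real.exp b := by rw [← Real.exp_add, add_sub_cancel]

/-! ### Isomorphism classes of hierarchies -/

lemma multiset_rel_coe_iff {α β : Type*} {r : α → β → Prop} {l₁ : List α} {l₂ : List β} :
    Multiset.Rel r (l₁ : Multiset α) l₂ ↔ ∃ l, List.Forall₂ r l₁ l ∧ l.Perm l₂ := by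
  constructor
  · induction l₁ generalizing l₂ with
    | nil =>
      intro h
      exact ⟨[], .nil, by simpa [eq_comm] using h⟩
    | cons a l₁ ih =>
      intro h
      obtain ⟨b, M, hab, hM, hb⟩ := Multiset.rel_cons_left.1 (Multiset.cons_coe a l₁ ▸ h)
      obtain ⟨l, rfl⟩ := Quot.exists_rep M
      obtain ⟨l', hl', hp⟩ := ih hM
      exact ⟨b :: l', .cons hab hl', (hp.cons b).trans (Multiset.coe_eq_coe.1 hb.symm)⟩
  · rintro ⟨l, h, hp⟩
    rw [← Multiset.coe_eq_coe.2 hp]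
    clear hp
    induction h with
    | nil => exact .zero
    | cons hab _ ih => exact .cons hab ih

lemma multiset_rel_comp {α β γ : Type*} {r : α → β → Prop} {q : β → γ → Prop} {s : Multiset α}
    {t : Multiset β} {u : Multiset γ} (h : Multiset.Rel r s t) (h' : Multiset.Rel q t u) :
    Multiset.Rel (Relation.Comp r q) s u := by
  induction h generalizing u with
  | zero => exact Multiset.rel_zero_left.2 (Multiset.rel_zero_left.1 h')
  | cons hab _ ih =>
    obtain ⟨c, u', hbc, hu', rfl⟩ := Multiset.rel_cons_left.1 h'
    exact .cons ⟨_, hab, hbc⟩ (ih hu')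

lemma finite_multisets_of_card_le {α : Type*} {s : Set α} (hs : s.Finite) (n : ℕ) :
    {M : Multiset α | M.card ≤ n ∧ ∀ a ∈ M, a ∈ s}.Finite := by
  classical
  refine (Set.finite_Iic (n • hs.toFinset.val)).subset fun M ⟨hM, hs'⟩ => ?_
  refine Multiset.le_iff_count.2 fun a => ?_
  by_cases ha : a ∈ M
  · rw [Multiset.count_nsmul,
      Multiset.count_eq_one_of_mem hs.toFinset.nodup (hs.mem_toFinset.2 (hs' a ha)), mul_one]
    exact (Multiset.count_le_card a M).trans hM
  · simp [ha]

namespace RTree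

lemma induction_children {P : RTree → Prop} (node : ∀ l, (∀ t ∈ l, P t) → P (.node l)) :
    ∀ t, P t
  | .node l => node l fun t _ => induction_children node t

lemma iso_node_iff {l₁ l₂ : List RTree} :
    Iso (.node l₁) (.node l₂) ↔ Multiset.Rel Iso (l₁ : Multiset RTree) l₂ :=
  ⟨fun | .node h hp => multiset_rel_coe_iff.2 ⟨_, h, hp⟩,
    fun h => let ⟨_, h, hp⟩ := multiset_rel_coe_iff.1 h; .node h hp⟩

lemma Iso.refl (t : RTree) : Iso t t := by
  induction t using induction_children with
  | node l ih => exact iso_node_iff.2 (Multiset.rel_refl_of_refl_on ih)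

lemma Iso.symm {s t : RTree} (h : Iso s t) : Iso t s := by
  induction s using induction_children generalizing t with
  | node l ih =>
    obtain ⟨l'⟩ := t
    exact iso_node_iff.2 (Multiset.rel_flip.1 ((iso_node_iff.1 h).mono fun s hs _ _ => ih s hs))

lemma Iso.trans {s t u : RTree} (hst : Iso s t) (htu : Iso t u) : Iso s u := by
  induction s using induction_children generalizing t u with
  | node l ih =>
    obtain ⟨l'⟩ := t
    obtain ⟨l''⟩ := u
    refine iso_node_iff.2 ((multiset_rel_comp (iso_node_iff.1 hst) (iso_node_iff.1 htu)).mono ?_)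
    rintro s hs v - ⟨t, hst, htv⟩
    exact ih s hs hst htv

lemma leaves_nil : leaves (.node []) = 1 := by
  rw [leaves]

lemma leaves_node {l : List RTree} (hl : l ≠ []) : leaves (.node l) = (l.map leaves).sum := by
  obtain ⟨a, l, rfl⟩ := List.exists_cons_of_ne_nil hl
  simp [leaves]

lemma Iso.leaves_eq {s t : RTree} (h : Iso s t) : s.leaves = t.leaves := by
  induction s using induction_children generalizing t with
  | node l ih =>
    obtain ⟨l'⟩ := t
    have h : Multiset.Rel (fun a b => leaves a = leaves b) (l : Multiset RTree) l' :=
      (iso_node_iff.1 h).mono fun s hs _ _ => ih s hs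
    rcases eq_or_ne l [] with rfl | hl
    · simp_all
    · have hl' : l' ≠ [] := by
        rintro rfl
        simp_all
      rw [leaves_node hl, leaves_node hl']
      have := Multiset.rel_eq.1 (Multiset.rel_map.2 h)
      simpa using congrArg Multiset.sum this

instance isoSetoid : Setoid RTree := ⟨Iso, Iso.refl, Iso.symm, Iso.trans⟩

/-- Isomorphism classes of rooted unordered trees. -/
def Shape : Type := Quotient isoSetoid

/-- The isomorphism class of a tree. -/
def shape (t : RTree) : Shape := Quotient.mk isoSetoid t

lemma shape_eq_shape_iff {s t : RTree} : s.shape = t.shape ↔ Iso s t :=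
  Quotient.eq (r := isoSetoid)

lemma shape_surjective : Function.Surjective shape := Quotient.exists_rep

lemma shape_node_eq_shape_node_iff {l₁ l₂ : List RTree} :
    shape (.node l₁) = shape (.node l₂) ↔
      (l₁.map shape : Multiset Shape) = (l₂.map shape : Multiset Shape) := by
  rw [shape_eq_shape_iff, iso_node_iff, ← Multiset.map_coe, ← Multiset.map_coe, ← Multiset.rel_eq,
    Multiset.rel_map]
  simp only [shape_eq_shape_iff]

lemma card_quot_iso {p : RTree → Prop} {C : Set Shape} (hp : ∀ t, p t ↔ t.shape ∈ C) :
    Nat.card (Quot fun a b : {t // p t} => Iso a.1 b.1) = C.ncard := by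
  rw [← Nat.card_coe_set_eq]
  refine Nat.card_congr (Equiv.ofBijective (Quot.lift (fun a => ⟨a.1.shape, (hp _).1 a.2⟩)
    fun a b h => Subtype.ext (shape_eq_shape_iff.2 h)) ⟨?_, ?_⟩)
  · rintro ⟨a⟩ ⟨b⟩ h
    exact Quot.sound (shape_eq_shape_iff.1 (congrArg Subtype.val h))
  · rintro ⟨u, hu⟩
    obtain ⟨t, rfl⟩ := shape_surjective u
    exact ⟨Quot.mk _ ⟨t, (hp t).2 hu⟩, rfl⟩

namespace Shape

/-- The shape whose root has the given multiset of shapes hanging below it. -/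
noncomputable def node (M : Multiset Shape) : Shape :=
  shape (.node (M.toList.map (Function.surjInv shape_surjective)))

lemma node_map_shape (l : List RTree) :
    node (l.map shape : Multiset Shape) = shape (.node l) := by
  refine shape_node_eq_shape_node_iff.2 ?_
  rw [List.map_map, (Function.rightInverse_surjInv shape_surjective).comp_eq_id, List.map_id,
    Multiset.coe_toList]

lemma exists_eq_map_shape (M : Multiset Shape) :
    ∃ l : List RTree, M = (l.map shape : Multiset Shape) := by
  obtain ⟨l, rfl⟩ := Quot.exists_rep M
  obtain ⟨l, rfl⟩ := List.map_surjective_iff.2 shape_surjective l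
  exact ⟨l, rfl⟩

lemma node_injective : Function.Injective node := fun M N h => by
  obtain ⟨l, rfl⟩ := exists_eq_map_shape M
  obtain ⟨l', rfl⟩ := exists_eq_map_shape N
  rwa [node_map_shape, node_map_shape, shape_node_eq_shape_node_iff] at h

lemma node_surjective : Function.Surjective node := fun u => by
  obtain ⟨⟨l⟩, rfl⟩ := shape_surjective u
  exact ⟨_, node_map_shape l⟩

/-- The shape with a single vertex. -/
noncomputable def leaf : Shape := node 0

/-- The number of leaves of a shape. -/
def size : Shape → ℕ := Quotient.lift leaves fun _ _ h => h.leaves_eq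

lemma size_shape (t : RTree) : t.shape.size = t.leaves := rfl

lemma size_leaf : leaf.size = 1 :=
  (congrArg size (node_map_shape [])).trans leaves_nil

lemma size_node {M : Multiset Shape} (hM : M ≠ 0) : (node M).size = (M.map size).sum := by
  obtain ⟨l, rfl⟩ := exists_eq_map_shape M
  rw [node_map_shape, size_shape, leaves_node (by rintro rfl; exact hM rfl)]
  simp [Function.comp_def, size_shape]

lemma node_induction {P : Shape → Prop} (node : ∀ M, (∀ v ∈ M, P v) → P (node M)) (u : Shape) :
    P u := by
  obtain ⟨t, rfl⟩ := shape_surjective u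
  induction t using induction_children with
  | node l ih =>
    rw [← node_map_shape]
    exact node _ (by simpa using ih)

lemma one_le_size (u : Shape) : 1 ≤ u.size := by
  induction u using node_induction with
  | node M ih =>
    rcases M.empty_or_exists_mem with rfl | ⟨v, hv⟩
    · exact size_leaf.ge
    · rw [size_node (by rintro rfl; simp at hv)]
      exact (ih v hv).trans (Multiset.le_sum_of_mem (Multiset.mem_map_of_mem size hv))

lemma size_lt_size_node {M : Multiset Shape} (hM : 2 ≤ M.card) {v : Shape} (hv : v ∈ M) :
    v.size < (node M).size := by
  obtain ⟨N, rfl⟩ := Multiset.exists_cons_of_mem hv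
  obtain ⟨w, hw⟩ := Multiset.card_pos_iff_exists_mem.1 (show 0 < N.card by
    rw [Multiset.card_cons] at hM
    omega)
  have hwN := Multiset.le_sum_of_mem (Multiset.mem_map_of_mem size hw)
  have := one_le_size w
  rw [size_node (Multiset.cons_ne_zero), Multiset.map_cons, Multiset.sum_cons]
  omega

/-- The shapes of the hierarchies none of whose subhierarchies has its shape in `E`. -/
inductive AvoidingHierarchy (E : Set Shape) : Shape → Prop
  | node {M : Multiset Shape} : M.card ≠ 1 → node M ∉ E → (∀ v ∈ M, AvoidingHierarchy E v) →
      AvoidingHierarchy E (node M)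

/-- The set of shapes of hierarchies avoiding `E`; all hierarchies are obtained for `E = ∅`. -/
def avoiding (E : Set Shape) : Set Shape := {u | AvoidingHierarchy E u}

lemma node_mem_avoiding {E : Set Shape} {M : Multiset Shape} :
    node M ∈ avoiding E ↔ M.card ≠ 1 ∧ node M ∉ E ∧ ∀ v ∈ M, v ∈ avoiding E := by
  refine ⟨fun h => ?_, fun ⟨h₁, h₂, h₃⟩ => .node h₁ h₂ h₃⟩
  generalize hu : node M = u at h
  obtain ⟨h₁, h₂, h₃⟩ := h
  obtain rfl := node_injective hu
  exact ⟨h₁, h₂, h₃⟩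

lemma shape_mem_avoiding {E : Set Shape} {t : RTree} :
    t.shape ∈ avoiding E ↔ t.IsHierarchy ∧ ∀ s, SubtreeOf s t → s.shape ∉ E := by
  induction t using induction_children with
  | node l ih =>
    have hsub : (∀ s, SubtreeOf s (.node l) → s.shape ∉ E) ↔
        shape (.node l) ∉ E ∧ ∀ t ∈ l, ∀ s, SubtreeOf s t → s.shape ∉ E := by
      refine ⟨fun h => ⟨h _ (.refl _), fun t ht s hs => h s (.child ht hs)⟩, fun ⟨h, h'⟩ s => ?_⟩
      rintro (_ | ⟨ht, hs⟩)
      exacts [h, h' _ ht s hs]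
    have hhier : IsHierarchy (.node l) ↔ l.length ≠ 1 ∧ ∀ t ∈ l, t.IsHierarchy :=
      ⟨fun | .node h h' => ⟨h, h'⟩, fun ⟨h, h'⟩ => .node h h'⟩
    rw [← node_map_shape, node_mem_avoiding, node_map_shape, hsub, hhier]
    simp +contextual only [Multiset.mem_coe, List.mem_map, Multiset.coe_card, List.length_map,
      forall_exists_index, and_imp, forall_apply_eq_imp_iff₂, ih]
    grind

lemma hierarchyCount_eq_ncard (n : ℕ) :
    hierarchyCount n = {u ∈ avoiding ∅ | u.size = n}.ncard :=
  card_quot_iso fun t => by simp [shape_mem_avoiding, size_shape]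

lemma avoidCount_eq_ncard (S : RTree) (n : ℕ) :
    avoidCount S n = {u ∈ avoiding {S.shape} | u.size = n}.ncard :=
  card_quot_iso fun t => by
    simp only [Avoids, mem_ofPred_eq, shape_mem_avoiding, mem_singleton_iff, shape_eq_shape_iff,
      size_shape]
    tauto

lemma avoiding_subset_avoiding {E E' : Set Shape} (h : E ⊆ E') : avoiding E' ⊆ avoiding E :=
  fun u => by
    induction u using node_induction with
    | node M ih =>
      simp only [node_mem_avoiding]
      exact fun ⟨h₁, h₂, h₃⟩ => ⟨h₁, fun hE => h₂ (h hE), fun v hv => ih v hv (h₃ v hv)⟩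

/-- The shapes with at least two children, all of which lie in `C`. -/
def nodes (C : Set Shape) : Set Shape := node '' {M | 2 ≤ M.card ∧ ∀ v ∈ M, v ∈ C}

/-- The members of `C` with at most `N` leaves. -/
def trunc (C : Set Shape) (N : ℕ) : Set Shape := {u ∈ C | u.size ≤ N}

lemma node_mem_nodes {C : Set Shape} {M : Multiset Shape} :
    node M ∈ nodes C ↔ 2 ≤ M.card ∧ ∀ v ∈ M, v ∈ C :=
  node_injective.mem_set_image

lemma leaf_notMem_nodes (C : Set Shape) : leaf ∉ nodes C := by
  simp [leaf, node_mem_nodes]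

lemma trunc_subset (C : Set Shape) (N : ℕ) : trunc C N ⊆ C := sep_subset _ _

lemma trunc_mono {C C' : Set Shape} (h : C ⊆ C') (N : ℕ) : trunc C N ⊆ trunc C' N :=
  fun _ hu => ⟨h hu.1, hu.2⟩

lemma trunc_nodes_subset (C : Set Shape) (N : ℕ) : trunc (nodes C) (N + 1) ⊆ nodes (trunc C N) := by
  rintro _ ⟨⟨M, ⟨hM, hC⟩, rfl⟩, hN⟩
  refine node_mem_nodes.2 ⟨hM, fun v hv => ⟨hC v hv, ?_⟩⟩
  have := size_lt_size_node hM hv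
  omega

lemma nodes_mono {C C' : Set Shape} (h : C ⊆ C') : nodes C ⊆ nodes C' :=
  image_mono fun _ hM => ⟨hM.1, fun v hv => h (hM.2 v hv)⟩

/-- The hierarchies in `E` all of whose proper subhierarchies avoid `E`: with `leaf`, these and
`avoiding E` make up everything that can be built from `avoiding E` in one step. -/
def boundary (E : Set Shape) : Set Shape := nodes (avoiding E) ∩ E

lemma insert_leaf_nodes_avoiding {E : Set Shape} (hE : leaf ∉ E) :
    insert leaf (nodes (avoiding E)) = avoiding E ∪ boundary E := by
  ext u
  obtain ⟨M, rfl⟩ := node_surjective u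
  rcases eq_or_ne M 0 with rfl | hM
  · have : node 0 ∉ E := hE
    simp [leaf, node_mem_avoiding, boundary, this]
  · have hleaf : node M ≠ leaf := node_injective.ne hM
    have hcard : M.card ≠ 0 := by simpa
    simp only [boundary, mem_insert_iff, mem_union, mem_inter_iff, node_mem_nodes,
      node_mem_avoiding, hleaf]
    grind

lemma boundary_empty : boundary ∅ = ∅ := inter_empty _

lemma insert_leaf_nodes_avoiding_empty : insert leaf (nodes (avoiding ∅)) = avoiding ∅ := by
  rw [insert_leaf_nodes_avoiding (notMem_empty leaf), boundary_empty, union_empty]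

lemma disjoint_avoiding_boundary (E : Set Shape) : Disjoint (avoiding E) (boundary E) := by
  refine disjoint_left.2 fun u hu hE => ?_
  obtain ⟨M, rfl⟩ := node_surjective u
  exact (node_mem_avoiding.1 hu).2.1 hE.2

lemma avoiding_union_boundary_subset {E : Set Shape} (hE : leaf ∉ E) :
    avoiding E ∪ boundary E ⊆ avoiding ∅ := by
  rw [← insert_leaf_nodes_avoiding hE, ← insert_leaf_nodes_avoiding_empty]
  exact insert_subset_insert (nodes_mono (avoiding_subset_avoiding (empty_subset E)))

lemma mem_avoiding_singleton_of_size_lt {s u : Shape} (hu : u ∈ avoiding ∅)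
    (h : u.size < s.size) : u ∈ avoiding {s} := by
  induction u using node_induction with
  | node M ih =>
    obtain ⟨hM, -, hC⟩ := node_mem_avoiding.1 hu
    refine node_mem_avoiding.2 ⟨hM, fun hs => h.ne (congrArg size hs), fun v hv => ?_⟩
    have hM2 : 2 ≤ M.card := by
      have := Multiset.card_pos_iff_exists_mem.2 ⟨v, hv⟩
      omega
    exact ih v hv (hC v hv) ((size_lt_size_node hM2 hv).trans h)

lemma mem_boundary_singleton {s : Shape} (hs : s ∈ avoiding ∅) (hleaf : s ≠ leaf) :
    s ∈ boundary {s} := by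
  rw [← insert_leaf_nodes_avoiding_empty] at hs
  obtain ⟨M, ⟨hM, hC⟩, rfl⟩ := hs.resolve_left hleaf
  refine ⟨node_mem_nodes.2 ⟨hM, fun v hv => ?_⟩, rfl⟩
  exact mem_avoiding_singleton_of_size_lt (hC v hv) (size_lt_size_node hM hv)

lemma card_le_size_node (M : Multiset Shape) : M.card ≤ (node M).size := by
  rcases eq_or_ne M 0 with rfl | hM
  · exact Nat.zero_le _
  · have := Multiset.card_nsmul_le_sum (s := M.map size) (a := 1) (by simp [one_le_size])
    simpa [size_node hM] using this

lemma trunc_zero (C : Set Shape) : trunc C 0 = ∅ :=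
  eq_empty_of_forall_notMem fun u hu => absurd (one_le_size u) (by simpa using hu.2)

lemma finite_trunc_nodes {C : Set Shape} {N : ℕ} (h : (trunc C N).Finite) :
    (trunc (nodes C) (N + 1)).Finite := by
  refine ((finite_multisets_of_card_le h (N + 1)).image node).subset fun u hu => ?_
  obtain ⟨M, ⟨-, hC⟩, rfl⟩ := trunc_nodes_subset C N hu
  exact ⟨M, ⟨(card_le_size_node M).trans hu.2, hC⟩, rfl⟩

lemma finite_trunc_avoiding (E : Set Shape) (N : ℕ) : (trunc (avoiding E) N).Finite := by
  suffices h : (trunc (avoiding ∅) N).Finite from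
    h.subset (trunc_mono (avoiding_subset_avoiding (empty_subset E)) N)
  induction N with
  | zero => simp [trunc_zero]
  | succ N ih =>
    refine ((finite_trunc_nodes ih).insert leaf).subset fun u ⟨hu, hN⟩ => ?_
    rw [← insert_leaf_nodes_avoiding_empty] at hu
    exact hu.imp_right fun h => ⟨h, hN⟩

/-! ### The functional equation and its solutions -/

section GeneratingFunction

variable {C E : Set Shape} {x : ℝ}

/-- The generating function of `C` at `x`. -/
noncomputable def gf (C : Set Shape) (x : ℝ) : ℝ := ∑' u : C, x ^ u.1.size

/-- The part of `∑ u : C, -log (1 - x ^ size u)` beyond the first-order part `gf C x`; its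
exponential accounts for repeated children. -/
noncomputable def tail (C : Set Shape) (x : ℝ) : ℝ := ∑' u : C, logTail (x ^ u.1.size)

lemma pow_size_le (hx0 : 0 ≤ x) (hx1 : x ≤ 1) (u : Shape) : x ^ u.size ≤ x :=
  pow_le_of_le_one hx0 hx1 (Nat.one_le_iff_ne_zero.1 (one_le_size u))

lemma pow_size_lt_one (hx0 : 0 ≤ x) (hx1 : x < 1) (u : Shape) : x ^ u.size < 1 :=
  (pow_size_le hx0 hx1.le u).trans_lt hx1

lemma summable_tail (hx0 : 0 ≤ x) (hx1 : x < 1) (hs : Summable fun u : C => x ^ u.1.size) :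
    Summable fun u : C => logTail (x ^ u.1.size) :=
  .of_nonneg_of_le (fun u => logTail_nonneg (pow_size_lt_one hx0 hx1 u))
    (fun u => logTail_le_mul (by positivity) (pow_size_le hx0 hx1.le u) hx1) (hs.mul_left _)

lemma gf_nonneg (hx0 : 0 ≤ x) : 0 ≤ gf C x := tsum_nonneg fun _ => by positivity

lemma tail_nonneg (hx0 : 0 ≤ x) (hx1 : x < 1) : 0 ≤ tail C x :=
  tsum_nonneg fun u => logTail_nonneg (pow_size_lt_one hx0 hx1 u)

lemma tail_mono {D : Set Shape} (hx0 : 0 ≤ x) (hx1 : x < 1) (hCD : C ⊆ D)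
    (hs : Summable fun u : D => logTail (x ^ u.1.size)) : tail C x ≤ tail D x :=
  Summable.tsum_le_tsum_of_inj (inclusion hCD) (inclusion_injective hCD)
    (fun u _ => logTail_nonneg (pow_size_lt_one hx0 hx1 u)) (fun _ => le_rfl)
    (Summable.comp_injective (f := fun u : D => logTail (x ^ u.1.size)) hs
      (inclusion_injective hCD) :) hs

lemma prod_map_pow_size {M : Multiset Shape} (hM : M ≠ 0) :
    (M.map fun u => x ^ u.size).prod = x ^ (node M).size := by
  rw [size_node hM]
  clear hM
  induction M using Multiset.induction_on with
  | empty => simp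
  | cons u M ih => simp [ih, pow_add]

/-- A shape in `nodes C` is a multiset of at least two members of `C`. -/
noncomputable def nodesEquiv (C : Set Shape) : {M : Multiset C // 2 ≤ M.card} ≃ nodes C :=
  .ofBijective
    (fun M => ⟨node (M.1.map (↑)), node_mem_nodes.2
      ⟨by simpa using M.2, fun v hv => by
        obtain ⟨c, -, rfl⟩ := Multiset.mem_map.1 hv
        exact c.2⟩⟩)
    ⟨fun M N h => Subtype.ext <| Multiset.map_injective Subtype.val_injective <|
        node_injective (congrArg Subtype.val h), by
      rintro ⟨_, M, ⟨hM, hC⟩, rfl⟩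
      lift M to Multiset C using hC
      exact ⟨⟨M, by simpa using hM⟩, rfl⟩⟩

lemma hasSum_nodes (hx0 : 0 ≤ x) (hx1 : x < 1) (hs : Summable fun u : C => x ^ u.1.size) :
    HasSum (fun u : nodes C => x ^ u.1.size) (Real.exp (gf C x + tail C x) - 1 - gf C x) := by
  have hlog : HasSum (fun u : C => -Real.log (1 - x ^ u.1.size)) (gf C x + tail C x) :=
    (hs.hasSum.add (summable_tail hx0 hx1 hs).hasSum).congr_fun fun u => by
      rw [logTail, add_sub_cancel]
  rw [← hlog.tsum_eq, ← (nodesEquiv C).hasSum_iff]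
  refine (hasSum_multiset_prod_two_le_card (fun u : C => by positivity)
    (fun u => pow_size_lt_one hx0 hx1 u) hs hlog.summable).congr_fun fun ⟨M, hM⟩ => ?_
  have hM0 : M.map (↑) ≠ (0 : Multiset Shape) := by
    intro h
    simp_all
  change x ^ (node (M.map (↑))).size = _
  simp [← prod_map_pow_size hM0]

lemma summable_mono {D : Set Shape} (hCD : C ⊆ D) (hs : Summable fun u : D => x ^ u.1.size) :
    Summable fun u : C => x ^ u.1.size :=
  (Summable.comp_injective (f := fun u : D => x ^ u.1.size) hs (inclusion_injective hCD) :)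

lemma gf_mono {D : Set Shape} (hx0 : 0 ≤ x) (hCD : C ⊆ D)
    (hs : Summable fun u : D => x ^ u.1.size) : gf C x ≤ gf D x :=
  Summable.tsum_le_tsum_of_inj (inclusion hCD) (inclusion_injective hCD)
    (fun _ _ => by positivity) (fun _ => le_rfl) (summable_mono hCD hs) hs

lemma gf_union {D : Set Shape} (hd : Disjoint C D)
    (hs : Summable fun u : ↥(C ∪ D) => x ^ u.1.size) : gf (C ∪ D) x = gf C x + gf D x :=
  Summable.tsum_union_disjoint (f := fun u : Shape => x ^ u.size) hd
    (summable_mono subset_union_left hs) (summable_mono subset_union_right hs)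

lemma gf_singleton (s : Shape) (x : ℝ) : gf {s} x = x ^ s.size :=
  tsum_singleton s fun u => x ^ u.size

lemma gf_empty (x : ℝ) : gf ∅ x = 0 := tsum_empty

lemma hasSum_insert_leaf_nodes (hx0 : 0 ≤ x) (hx1 : x < 1)
    (hs : Summable fun u : C => x ^ u.1.size) :
    HasSum (fun u : ↥(insert leaf (nodes C)) => x ^ u.1.size)
      (x + (Real.exp (gf C x + tail C x) - 1 - gf C x)) := by
  have hleaf : HasSum (fun u : ({leaf} : Set Shape) => x ^ u.1.size) x := by
    simpa [size_leaf] using hasSum_unique fun u : ({leaf} : Set Shape) => x ^ u.1.size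
  exact HasSum.add_disjoint (f := fun u : Shape => x ^ u.size)
    (disjoint_singleton_left.2 (leaf_notMem_nodes C)) hleaf (hasSum_nodes hx0 hx1 hs)

lemma exp_gf_add_tail (hE : leaf ∉ E) (hx0 : 0 ≤ x) (hx1 : x < 1)
    (hs : Summable fun u : avoiding E => x ^ u.1.size) :
    Real.exp (gf (avoiding E) x + tail (avoiding E) x) =
      1 + 2 * gf (avoiding E) x + gf (boundary E) x - x := by
  have hsum := insert_leaf_nodes_avoiding hE ▸ hasSum_insert_leaf_nodes hx0 hx1 hs
  have : gf (avoiding E ∪ boundary E) x = _ := hsum.tsum_eq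
  rw [gf_union (disjoint_avoiding_boundary E) hsum.summable] at this
  linarith

lemma exp_gf_add_tail_empty (hx0 : 0 ≤ x) (hx1 : x < 1)
    (hs : Summable fun u : avoiding ∅ => x ^ u.1.size) :
    Real.exp (gf (avoiding ∅) x + tail (avoiding ∅) x) = 1 + 2 * gf (avoiding ∅) x - x := by
  rw [exp_gf_add_tail (notMem_empty leaf) hx0 hx1 hs, boundary_empty, gf_empty, add_zero]

lemma summable_trunc_avoiding (E : Set Shape) (x : ℝ) (N : ℕ) :
    Summable fun u : trunc (avoiding E) N => x ^ u.1.size :=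
  have := (finite_trunc_avoiding E N).to_subtype
  .of_finite

lemma trunc_union_boundary_subset (hE : leaf ∉ E) {N : ℕ}
    (hN : ∀ u ∈ boundary E, u.size ≤ N + 1) :
    trunc (avoiding E) (N + 1) ∪ boundary E ⊆ insert leaf (nodes (trunc (avoiding E) N)) := by
  intro u hu
  have huN : u.size ≤ N + 1 := hu.elim And.right (hN u)
  have hu' : u ∈ insert leaf (nodes (avoiding E)) :=
    insert_leaf_nodes_avoiding hE ▸ hu.imp_left And.left
  exact hu'.imp_right fun hu' => trunc_nodes_subset _ N ⟨hu', huN⟩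

/- By `trunc_union_boundary_subset` the truncations `gf (trunc (avoiding E) N) x` are dominated by
the Picard iterates of the equation in `exp_gf_add_tail`, hence by any supersolution `y`. -/
lemma gf_trunc_le_of_supersolution (hE : leaf ∉ E) (hx0 : 0 ≤ x) (hx1 : x < 1) {N₀ : ℕ}
    (hN₀ : ∀ u ∈ boundary E, u.size ≤ N₀ + 1) {y l : ℝ}
    (hl : ∀ N, gf (trunc (avoiding E) N) x ≤ y → tail (trunc (avoiding E) N) x ≤ l)
    (hsup : Real.exp (y + l) ≤ 1 + 2 * y + gf (boundary E) x - x)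
    (h₀ : gf (trunc (avoiding E) N₀) x ≤ y) {N : ℕ} (hN : N₀ ≤ N) :
    gf (trunc (avoiding E) N) x ≤ y := by
  induction N, hN using Nat.le_induction with
  | base => exact h₀
  | succ N hN ih =>
    set a := gf (trunc (avoiding E) N) x
    have hsum := hasSum_insert_leaf_nodes hx0 hx1 (summable_trunc_avoiding E x N)
    have hsub := trunc_union_boundary_subset hE fun u hu =>
      (hN₀ u hu).trans (Nat.succ_le_succ hN)
    have hdisj := (disjoint_avoiding_boundary E).mono_left (trunc_subset _ (N + 1))
    have hstep : gf (trunc (avoiding E) (N + 1)) x + gf (boundary E) x ≤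
        x + (Real.exp (a + tail (trunc (avoiding E) N) x) - 1 - a) := by
      rw [← hsum.tsum_eq, ← gf_union hdisj (summable_mono hsub hsum.summable)]
      exact gf_mono hx0 hsub hsum.summable
    have htail := hl N ih
    have ha : 0 ≤ a := gf_nonneg hx0
    have ht : 0 ≤ tail (trunc (avoiding E) N) x := tail_nonneg hx0 hx1
    have hconvex := exp_mul_one_add_sub_le (a + tail (trunc (avoiding E) N) x) (y + l)
    nlinarith [Real.one_le_exp (add_nonneg ha ht)]

lemma summable_of_gf_trunc_le (hx0 : 0 ≤ x) {N₀ : ℕ} {y : ℝ}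
    (h : ∀ N, N₀ ≤ N → gf (trunc (avoiding E) N) x ≤ y) :
    Summable fun u : avoiding E => x ^ u.1.size := by
  refine summable_of_sum_le (c := y) (fun _ => by positivity) fun s => ?_
  let N := max N₀ (s.sup fun u => u.1.size)
  have hs : (s.map (.subtype _) : Set Shape) ⊆ trunc (avoiding E) N := by
    rintro _ hu
    obtain ⟨u, hus, rfl⟩ := Finset.mem_map.1 (Finset.mem_coe.1 hu)
    exact ⟨u.2, le_max_of_le_right (Finset.le_sup (f := fun u : avoiding E => u.1.size) hus)⟩
  calc ∑ u ∈ s, x ^ u.1.size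
      = ∑ u ∈ s.map (.subtype _), x ^ u.size := by
        rw [Finset.sum_map, Function.Embedding.coe_subtype]
    _ = gf (s.map (.subtype _) : Set Shape) x :=
        (Finset.tsum_subtype' (s.map (.subtype _)) fun u : Shape => x ^ u.size).symm
    _ ≤ gf (trunc (avoiding E) N) x := gf_mono hx0 hs (summable_trunc_avoiding E x N)
    _ ≤ y := h N (le_max_left _ _)

lemma exp_gf_add_tail_lt_two {x' : ℝ} (hx0 : 0 ≤ x) (hx : x < x') (hx1 : x' < 1)
    (hs : Summable fun u : avoiding ∅ => x' ^ u.1.size) :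
    Real.exp (gf (avoiding ∅) x + tail (avoiding ∅) x) < 2 := by
  set G := gf (avoiding ∅)
  set L := tail (avoiding ∅)
  have hsx : Summable fun u : avoiding ∅ => x ^ u.1.size :=
    hs.of_nonneg_of_le (fun _ => by positivity) fun _ => by gcongr
  have hG : G x ≤ G x' := hsx.tsum_le_tsum (fun _ => by gcongr) hs
  have hL : L x ≤ L x' :=
    (summable_tail hx0 (hx.trans hx1) hsx).tsum_le_tsum (fun u => logTail_mono (by positivity)
      (by gcongr) (pow_size_lt_one (hx0.trans hx.le) hx1 u))
      (summable_tail (hx0.trans hx.le) hx1 hs)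
  have hZ : Real.exp (G x + L x) = 1 + 2 * G x - x :=
    exp_gf_add_tail_empty hx0 (hx.trans hx1) hsx
  have hZ' : Real.exp (G x' + L x') = 1 + 2 * G x' - x' :=
    exp_gf_add_tail_empty (hx0.trans hx.le) hx1 hs
  have hconvex := exp_mul_one_add_sub_le (G x + L x) (G x' + L x')
  nlinarith [Real.exp_pos (G x + L x)]

lemma le_half_of_summable (hx0 : 0 ≤ x) (hx1 : x < 1)
    (hs : Summable fun u : avoiding ∅ => x ^ u.1.size) : x ≤ 1 / 2 := by
  have hG : 0 ≤ gf (avoiding ∅) x := gf_nonneg hx0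
  have hL : 0 ≤ tail (avoiding ∅) x := tail_nonneg hx0 hx1
  have hquad := Real.quadratic_le_exp_of_nonneg (add_nonneg hG hL)
  rw [exp_gf_add_tail_empty hx0 hx1 hs] at hquad
  nlinarith [sq_nonneg (gf (avoiding ∅) x - 1)]

lemma tail_le_mul_gf (hx0 : 0 ≤ x) (hx1 : x < 1) (hs : Summable fun u : C => x ^ u.1.size) :
    tail C x ≤ x / (1 - x) * gf C x := by
  rw [gf, ← tsum_mul_left]
  exact (summable_tail hx0 hx1 hs).tsum_le_tsum
    (fun u => logTail_le_mul (by positivity) (pow_size_le hx0 hx1.le u) hx1) (hs.mul_left _)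

lemma summable_one_tenth : Summable fun u : avoiding ∅ => (1 / 10 : ℝ) ^ u.1.size := by
  have htail (N : ℕ) (hN : gf (trunc (avoiding ∅) N) (1 / 10) ≤ 1 / 5) :
      tail (trunc (avoiding ∅) N) (1 / 10) ≤ 1 / 45 := by
    have := tail_le_mul_gf (by norm_num) (by norm_num) (summable_trunc_avoiding ∅ (1 / 10) N)
    linarith
  have hexp : Real.exp (1 / 5 + 1 / 45) ≤ 1 + 2 * (1 / 5) + gf (boundary ∅) (1 / 10) - 1 / 10 :=
    calc Real.exp (1 / 5 + 1 / 45) ≤ 1 / (1 - (1 / 5 + 1 / 45)) :=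
          Real.exp_bound_div_one_sub_of_interval (by norm_num) (by norm_num)
      _ ≤ _ := by rw [boundary_empty, gf_empty]; norm_num
  refine summable_of_gf_trunc_le (by norm_num) (N₀ := 0) fun N hN =>
    gf_trunc_le_of_supersolution (notMem_empty leaf) (by norm_num) (by norm_num)
      (by simp [boundary_empty]) htail hexp ?_ hN
  rw [trunc_zero, gf_empty]
  norm_num

lemma gf_lt_of_summable_of_lt {x' : ℝ} (hx0 : 0 ≤ x) (hx : x < x') (hx1 : x' < 1)
    (hs : Summable fun u : avoiding ∅ => x' ^ u.1.size) : gf (avoiding ∅) x < (1 + x) / 2 := by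
  have hsx : Summable fun u : avoiding ∅ => x ^ u.1.size :=
    hs.of_nonneg_of_le (fun _ => by positivity) fun _ => by gcongr
  have := exp_gf_add_tail_lt_two hx0 hx hx1 hs
  rw [exp_gf_add_tail_empty hx0 (hx.trans hx1) hsx] at this
  linarith

lemma summable_and_gf_le_of_forall_lt {r : ℝ} (hr0 : 0 < r) (hr1 : r ≤ 1)
    (hs : ∀ x, 0 ≤ x → x < r → Summable fun u : avoiding ∅ => x ^ u.1.size) :
    (Summable fun u : avoiding ∅ => r ^ u.1.size) ∧ gf (avoiding ∅) r ≤ (1 + r) / 2 := by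
  have hlt {x : ℝ} (hx : x ∈ Ioo 0 r) : gf (avoiding ∅) x ≤ (1 + x) / 2 := by
    obtain ⟨x', hx', hr⟩ := exists_between hx.2
    exact (gf_lt_of_summable_of_lt hx.1.le hx' (hr.trans_le hr1)
      (hs x' (hx.1.trans hx').le hr)).le
  have hfinite (s : Finset (avoiding ∅)) : ∑ u ∈ s, r ^ u.1.size ≤ (1 + r) / 2 := by
    have hl : Continuous fun x : ℝ => ∑ u ∈ s, x ^ u.1.size := by fun_prop
    have hr : Continuous fun x : ℝ => (1 + x) / 2 := by fun_prop
    refine le_of_tendsto_of_tendsto (hl.continuousWithinAt (s := Iio r))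
      (hr.continuousWithinAt (s := Iio r)) ?_
    filter_upwards [Ioo_mem_nhdsLT hr0] with x hx
    exact ((hs x hx.1.le hx.2).sum_le_tsum s fun _ _ => pow_nonneg hx.1.le _).trans (hlt hx)
  have hsum := summable_of_sum_le (fun u : avoiding ∅ => pow_nonneg hr0.le u.1.size) hfinite
  exact ⟨hsum, hsum.tsum_le_of_sum_le hfinite⟩

lemma exp_gf_add_tail_le (hE : leaf ∉ E) (hx0 : 0 ≤ x) (hx1 : x < 1)
    (hs : Summable fun u : avoiding ∅ => x ^ u.1.size) (hgf : gf (avoiding ∅) x ≤ (1 + x) / 2) :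
    Real.exp (gf (avoiding E) x + tail (avoiding E) x) ≤ 2 - gf (boundary E) x := by
  have hsub := avoiding_union_boundary_subset hE
  have hle := gf_mono hx0 hsub hs
  rw [gf_union (disjoint_avoiding_boundary E) (summable_mono hsub hs)] at hle
  rw [exp_gf_add_tail hE hx0 hx1 (summable_mono (subset_union_left.trans hsub) hs)]
  linarith

lemma logTail_pow_size_le {r : ℝ} (hr0 : 0 ≤ r) (hr1 : r < 1) (hx : x ∈ Icc 0 (√r)) (u : Shape) :
    logTail (x ^ u.size) ≤ r ^ u.size / (1 - √r) := by
  have hsqrt : √r < 1 := (Real.sqrt_lt' one_pos).2 (by simpa)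
  have hx1 : x < 1 := hx.2.trans_lt hsqrt
  refine (logTail_le (pow_size_lt_one hx.1 hx1 u)).trans ?_
  have hle : x ^ u.size ≤ √r := (pow_size_le hx.1 hx1.le u).trans hx.2
  have hsq : (x ^ u.size) ^ 2 ≤ r ^ u.size := by
    rw [pow_right_comm]
    gcongr
    exact (Real.le_sqrt hx.1 hr0).1 hx.2
  gcongr

lemma summable_tail_of_le_sqrt {r : ℝ} (hr0 : 0 ≤ r) (hr1 : r < 1)
    (hs : Summable fun u : C => r ^ u.1.size) (hx : x ∈ Icc 0 (√r)) :
    Summable fun u : C => logTail (x ^ u.1.size) := by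
  have hsqrt : √r < 1 := (Real.sqrt_lt' one_pos).2 (by simpa)
  exact .of_nonneg_of_le
    (fun u => logTail_nonneg (pow_size_lt_one hx.1 (hx.2.trans_lt hsqrt) u))
    (fun u => logTail_pow_size_le hr0 hr1 hx u) (hs.div_const _)

lemma continuousOn_tail {r : ℝ} (hr0 : 0 ≤ r) (hr1 : r < 1)
    (hs : Summable fun u : C => r ^ u.1.size) : ContinuousOn (tail C) (Icc 0 (√r)) := by
  have hsqrt : √r < 1 := (Real.sqrt_lt' one_pos).2 (by simpa)
  have hlt {x : ℝ} (hx : x ∈ Icc 0 (√r)) (u : Shape) : x ^ u.size < 1 :=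
    pow_size_lt_one hx.1 (hx.2.trans_lt hsqrt) u
  refine continuousOn_tsum (fun u => continuousOn_logTail.comp (by fun_prop) fun x hx => hlt hx u)
    (hs.div_const (1 - √r)) fun u x hx => ?_
  rw [Real.norm_of_nonneg (logTail_nonneg (hlt hx u))]
  exact logTail_pow_size_le hr0 hr1 hx u

lemma continuous_gf_of_finite (hC : C.Finite) : Continuous (gf C) := by
  have := hC.fintype
  have hgf : gf C = fun x => ∑ u : C, x ^ u.1.size := funext fun x => tsum_fintype _
  rw [hgf]
  fun_prop

lemma exists_pos_exp_add_lt {Y : ℝ} (hY : Real.exp Y < 2) :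
    ∃ t, 0 < t ∧ Real.exp (Y + t) < Real.exp Y + 2 * t := by
  set z := Real.exp Y with hz
  have hz0 : 0 < z := Real.exp_pos Y
  refine ⟨(2 - z) / 4, by linarith, ?_⟩
  have := Real.exp_bound_div_one_sub_of_interval (x := (2 - z) / 4) (by linarith) (by linarith)
  rw [Real.exp_add, ← hz]
  have h1 : 0 < 1 - (2 - z) / 4 := by linarith
  rw [le_div_iff₀ h1] at this
  nlinarith

lemma exists_gt_summable (hE : leaf ∉ E) (hfin : E.Finite) {r : ℝ} (hr0 : 0 < r) (hr1 : r < 1)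
    (hs : Summable fun u : avoiding E => r ^ u.1.size)
    (hlt : Real.exp (gf (avoiding E) r + tail (avoiding E) r) < 2) :
    ∃ x, r < x ∧ Summable fun u : avoiding E => x ^ u.1.size := by
  set G := gf (avoiding E)
  set L := tail (avoiding E)
  set B := gf (boundary E)
  have hfin : (boundary E).Finite := hfin.subset inter_subset_right
  have hB : Continuous B := continuous_gf_of_finite hfin
  obtain ⟨N₀, hN₀⟩ := (hfin.image size).bddAbove
  have hsqrt : √r < 1 := (Real.sqrt_lt' one_pos).2 (by simpa)
  have hr : r < √r := (Real.lt_sqrt hr0.le).2 (by nlinarith)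
  obtain ⟨t, ht, hexp⟩ := exists_pos_exp_add_lt hlt
  rw [exp_gf_add_tail hE hr0.le hr1 hs] at hexp
  have hL : ContinuousAt L r :=
    (continuousOn_tail hr0.le hr1 hs).continuousAt (Icc_mem_nhds hr0 hr)
  have hsup : ∀ᶠ x in 𝓝 r, Real.exp (G r + t + L x) < 1 + 2 * (G r + t) + B x - x := by
    refine ContinuousAt.eventually_lt (by fun_prop) (by fun_prop) ?_
    rw [add_right_comm]
    linarith
  have hbase : ∀ᶠ x in 𝓝 r, gf (trunc (avoiding E) N₀) x < G r + t := by
    refine (continuous_gf_of_finite (finite_trunc_avoiding E N₀)).continuousAt.eventually_lt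
      continuousAt_const ?_
    have := gf_mono hr0.le (trunc_subset _ N₀) hs
    linarith
  obtain ⟨x, ⟨hsup, hbase⟩, hx⟩ :=
    (((hsup.and hbase).filter_mono nhdsWithin_le_nhds).and (Ioo_mem_nhdsGT hr)).exists
  have hx0 : 0 ≤ x := (hr0.trans hx.1).le
  have hx1 : x < 1 := hx.2.trans hsqrt
  have htrunc (N : ℕ) : tail (trunc (avoiding E) N) x ≤ L x :=
    tail_mono hx0 hx1 (trunc_subset _ N) (summable_tail_of_le_sqrt hr0.le hr1 hs ⟨hx0, hx.2.le⟩)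
  exact ⟨x, hx.1, summable_of_gf_trunc_le hx0 fun N hN =>
    gf_trunc_le_of_supersolution hE hx0 hx1
      (fun u hu => (hN₀ (mem_image_of_mem size hu)).trans N₀.le_succ)
      (fun N _ => htrunc N) hsup.le hbase.le hN⟩

lemma exists_gt_summable_of_boundary_nonempty (hE : leaf ∉ E) (hfin : E.Finite)
    (hB : (boundary E).Nonempty) {r : ℝ} (hr0 : 0 < r) (hr1 : r < 1)
    (hs : ∀ x, 0 ≤ x → x < r → Summable fun u : avoiding ∅ => x ^ u.1.size) :
    ∃ x, r < x ∧ Summable fun u : avoiding E => x ^ u.1.size := by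
  obtain ⟨s, hs'⟩ := hB
  obtain ⟨hr, hgf⟩ := summable_and_gf_le_of_forall_lt hr0 hr1.le hs
  have hsub := avoiding_union_boundary_subset hE
  refine exists_gt_summable hE hfin hr0 hr1 (summable_mono (subset_union_left.trans hsub) hr) ?_
  have hpos : r ^ s.size ≤ gf (boundary E) r :=
    gf_singleton s r ▸ gf_mono hr0.le (singleton_subset_iff.2 hs')
      (summable_mono (subset_union_right.trans hsub) hr)
  linarith [exp_gf_add_tail_le hE hr0.le hr1 hr hgf, pow_pos hr0 s.size]

lemma summable_ncard_mul_pow_iff (hx0 : 0 ≤ x) :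
    (Summable fun n => ({u ∈ avoiding E | u.size = n}.ncard : ℝ) * x ^ n) ↔
      Summable fun u : avoiding E => x ^ u.1.size := by
  let e := Equiv.sigmaFiberEquiv fun u : avoiding E => u.1.size
  have hpow (n : ℕ) (u : {u : avoiding E // u.1.size = n}) : x ^ (e ⟨n, u⟩).1.size = x ^ n :=
    congrArg (x ^ ·) u.2
  have hcard (n : ℕ) : Nat.card {u : avoiding E // u.1.size = n} =
      {u ∈ avoiding E | u.size = n}.ncard := by
    rw [← Nat.card_coe_set_eq]
    exact Nat.card_congr (Equiv.subtypeSubtypeEquivSubtypeInter (· ∈ avoiding E) (·.size = n))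
  have hfiber (n : ℕ) : Finite {u : avoiding E // u.1.size = n} := by
    have := ((finite_trunc_avoiding E n).subset fun u (hu : u ∈ {u ∈ avoiding E | u.size = n}) =>
      ⟨hu.1, hu.2.le⟩).to_subtype
    exact .of_equiv {u ∈ avoiding E | u.size = n}
      (Equiv.subtypeSubtypeEquivSubtypeInter (· ∈ avoiding E) (·.size = n)).symm
  rw [← e.summable_iff, summable_sigma_of_nonneg
    (f := (fun u : avoiding E => x ^ u.1.size) ∘ e) fun _ => pow_nonneg hx0 _]
  simp only [Function.comp_apply, hpow, tsum_const, hcard, nsmul_eq_mul]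
  exact ⟨fun h => ⟨fun n => .of_finite, h⟩, And.right⟩

end GeneratingFunction
end Shape
end RTree

/-! ### Radii of convergence -/

lemma ofReal_le_radiusOf {a : ℕ → ℝ} {x : ℝ} (ha : ∀ n, 0 ≤ a n) (hx0 : 0 ≤ x)
    (hs : Summable fun n => a n * x ^ n) : ENNReal.ofReal x ≤ radiusOf a := by
  refine FormalMultilinearSeries.le_radius_of_summable _ ?_
  simpa [FormalMultilinearSeries.ofScalars_norm, abs_of_nonneg, ha, hx0] using hs

lemma summable_of_ofReal_lt_radiusOf {a : ℕ → ℝ} {x : ℝ} (ha : ∀ n, 0 ≤ a n) (hx0 : 0 ≤ x)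
    (hx : ENNReal.ofReal x < radiusOf a) : Summable fun n => a n * x ^ n := by
  have := FormalMultilinearSeries.summable_norm_mul_pow _ hx
  simpa [FormalMultilinearSeries.ofScalars_norm, abs_of_nonneg, ha, hx0] using this

open RTree RTree.Shape

lemma summable_hierarchyCount_mul_pow_iff {x : ℝ} (hx0 : 0 ≤ x) :
    (Summable fun n => (hierarchyCount n : ℝ) * x ^ n) ↔
      Summable fun u : avoiding ∅ => x ^ u.1.size := by
  simp only [hierarchyCount_eq_ncard, summable_ncard_mul_pow_iff hx0]

lemma summable_avoidCount_mul_pow_iff (S : RTree) {x : ℝ} (hx0 : 0 ≤ x) :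
    (Summable fun n => (avoidCount S n : ℝ) * x ^ n) ↔
      Summable fun u : avoiding {S.shape} => x ^ u.1.size := by
  simp only [avoidCount_eq_ncard, summable_ncard_mul_pow_iff hx0]

lemma radiusOf_hierarchyCount_pos : 0 < radiusOf fun n => (hierarchyCount n : ℝ) :=
  calc 0 < ENNReal.ofReal (1 / 10) := ENNReal.ofReal_pos.2 (by norm_num)
    _ ≤ _ := ofReal_le_radiusOf (fun _ => Nat.cast_nonneg _) (by norm_num)
      ((summable_hierarchyCount_mul_pow_iff (by norm_num)).2 summable_one_tenth)

lemma radiusOf_hierarchyCount_lt_one : (radiusOf fun n => (hierarchyCount n : ℝ)) < 1 := by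
  suffices h : (radiusOf fun n => (hierarchyCount n : ℝ)) ≤ ENNReal.ofReal (3 / 4) from
    h.trans_lt (ENNReal.ofReal_lt_one.2 (by norm_num))
  refine not_lt.1 fun h => ?_
  have hs := summable_of_ofReal_lt_radiusOf (fun _ => Nat.cast_nonneg _) (by norm_num) h
  have := le_half_of_summable (by norm_num) (by norm_num)
    ((summable_hierarchyCount_mul_pow_iff (by norm_num)).1 hs)
  norm_num at this

lemma exists_ofReal_eq_radiusOf_hierarchyCount :
    ∃ r : ℝ, 0 < r ∧ r < 1 ∧ ENNReal.ofReal r = radiusOf fun n => (hierarchyCount n : ℝ) :=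
  have hlt := radiusOf_hierarchyCount_lt_one
  have htop := (hlt.trans ENNReal.one_lt_top).ne
  ⟨_, ENNReal.toReal_pos radiusOf_hierarchyCount_pos.ne' htop,
    (ENNReal.toReal_lt_toReal htop ENNReal.one_ne_top).2 hlt, ENNReal.ofReal_toReal htop⟩

/-- For any hierarchy `S` of size `m ≥ 2`, the radius of convergence of
`∑ₙ H⁽ᵐ⁾ₙ xⁿ` (hierarchies avoiding `S`) is strictly larger than the radius of
convergence of `∑ₙ Hₙ xⁿ` (all hierarchies). -/
theorem radius_avoiding_gt_radius {m : ℕ} (hm : 2 ≤ m) (S : RTree)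
    (hS : S.IsHierarchy) (hSm : S.leaves = m) :
    radiusOf (fun n => (hierarchyCount n : ℝ)) <
      radiusOf (fun n => (avoidCount S n : ℝ)) := by
  have hleaf : S.shape ≠ leaf := by
    intro h
    have : S.leaves = 1 := (congrArg size h).trans size_leaf
    omega
  have hmem : S.shape ∈ avoiding ∅ := shape_mem_avoiding.2 ⟨hS, fun _ _ => notMem_empty _⟩
  obtain ⟨r, hr0, hr1, hr⟩ := exists_ofReal_eq_radiusOf_hierarchyCount
  have hs (x : ℝ) (hx0 : 0 ≤ x) (hx : x < r) : Summable fun u : avoiding ∅ => x ^ u.1.size := by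
    refine (summable_hierarchyCount_mul_pow_iff hx0).1 <|
      summable_of_ofReal_lt_radiusOf (fun _ => Nat.cast_nonneg _) hx0 ?_
    exact hr ▸ (ENNReal.ofReal_lt_ofReal_iff hr0).2 hx
  obtain ⟨x, hrx, hx⟩ := exists_gt_summable_of_boundary_nonempty
    (mem_singleton_iff.not.2 hleaf.symm) (finite_singleton _)
    ⟨_, mem_boundary_singleton hmem hleaf⟩ hr0 hr1 hs
  have hx0 : 0 < x := hr0.trans hrx
  calc radiusOf (fun n => (hierarchyCount n : ℝ)) = ENNReal.ofReal r := hr.symm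
    _ < ENNReal.ofReal x := (ENNReal.ofReal_lt_ofReal_iff hx0).2 hrx
    _ ≤ radiusOf fun n => (avoidCount S n : ℝ) :=
      ofReal_le_radiusOf (fun _ => Nat.cast_nonneg _) hx0.le
        ((summable_avoidCount_mul_pow_iff S hx0.le).2 hx)
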